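/- (Proposition 1, confidence-vector disclosure.) Fix an integer K ≥ 2 and reals ε_e > 0, Δ ≥ 0, ε_a with Δ/(1+Δ) < ε_a < 1, define γ^out, γ^in as in the parameterization below, and let μ^out, μ^in be the probability measures on S_K with densities f_{γ^out}, f_{γ^in}. Then for every measurable set A ⊆ S_K, μ^out(A) − μ^in(A) ≤ Adv^CV-ub(Δ, ε_a, ε_e, K). -/

import Mathlib

open MeasureTheory

/-- The open standard simplex `S_K` in coordinates `(p_0, …, p_{K-2}) ∈ ℝ^{K-1}`:
all coordinates positive and their sum less than 1 (so that `p_{K-1} = 1 - Σ` is positive). -/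
def simplexCoords (K : ℕ) : Set (Fin (K - 1) → ℝ) :=
  {x | (∀ i, 0 < x i) ∧ ∑ i, x i < 1}

/-- The full probability vector `p ∈ ℝ^K` obtained from the coordinates
`(p_0, …, p_{K-2})`, with `p_{K-1} = 1 - Σ_{k < K-1} p_k`. -/
noncomputable def fullProb (K : ℕ) (x : Fin (K - 1) → ℝ) : Fin K → ℝ :=
  fun k => if h : (k : ℕ) < K - 1 then x ⟨k, h⟩ else 1 - ∑ i, x i

/-- Multivariate Beta function `B(γ) = (∏ₖ Γ(γₖ)) / Γ(Σₖ γₖ)`. -/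
noncomputable def multiBeta {K : ℕ} (γ : Fin K → ℝ) : ℝ :=
  (∏ i, Real.Gamma (γ i)) / Real.Gamma (∑ i, γ i)

/-- Dirichlet density `f_γ(p) = (1/B(γ)) ∏ₖ pₖ^(γₖ - 1)` in simplex coordinates. -/
noncomputable def dirichletPdf {K : ℕ} (γ : Fin K → ℝ) (x : Fin (K - 1) → ℝ) : ℝ :=
  (1 / multiBeta γ) * ∏ k, (fullProb K x k) ^ (γ k - 1)

/-- Digamma function `ψ(x) = Γ'(x)/Γ(x)`. -/
noncomputable def digamma (x : ℝ) : ℝ := deriv Real.Gamma x / Real.Gamma x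

/-- Dirichlet parameters for the model trained *without* the target point. -/
noncomputable def gammaOut (K : ℕ) (epsE epsA : ℝ) : Fin K → ℝ := fun k =>
  if (k : ℕ) = 0 then (1 - epsA) / epsE else epsA / (((K : ℝ) - 1) * epsE)

/-- Dirichlet parameters for the model trained *with* the target point. -/
noncomputable def gammaIn (K : ℕ) (epsE Δ epsA : ℝ) : Fin K → ℝ := fun k =>
  if (k : ℕ) = 0 then (1 + Δ) * (1 - epsA) / epsE
  else (epsA * (1 + Δ) - Δ) / (((K : ℝ) - 1) * epsE)

/-- The upper bound on the attacker's advantage under confidence-vector disclosure. -/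
noncomputable def AdvCVub (Δ epsA epsE : ℝ) (K : ℕ) : ℝ :=
  Real.sqrt ((Δ * (1 - epsA) / epsE) *
    (digamma ((1 + Δ) * (1 - epsA) / epsE) - digamma ((1 - epsA) / epsE)
      + digamma (epsA / (((K : ℝ) - 1) * epsE))
      - digamma ((epsA * (1 + Δ) - Δ) / (((K : ℝ) - 1) * epsE))))

/-- Normalised power density of the Gamma semigroup. -/
noncomputable def gphi (a x : ℝ) : ENNReal :=
  if 0 < x then ENNReal.ofReal (x ^ (a - 1) / Real.Gamma a) else 0

lemma gphi_measurable (a : ℝ) : Measurable (gphi a) := by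
  unfold gphi
  exact Measurable.ite measurableSet_Ioi (by fun_prop) (by fun_prop)

lemma gphi_conv (a c s : ℝ) (ha : 0 < a) (hc : 0 < c) :
    ∫⁻ x, gphi a x * gphi c (s - x) = gphi (a + c) s := by
  rcases le_or_gt s 0 with hs | hs
  · have : ∀ x, gphi a x * gphi c (s - x) = 0 := by
      intro x
      unfold gphi
      by_cases hx : 0 < x
      · rw [if_neg (show ¬ 0 < s - x by linarith), mul_zero]
      · rw [if_neg hx, zero_mul]
    simp only [this, lintegral_zero]
    rw [gphi, if_neg (by linarith)]
  · have hga := Real.Gamma_pos_of_pos ha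
    have hgc := Real.Gamma_pos_of_pos hc
    have hgac := Real.Gamma_pos_of_pos (add_pos ha hc)
    have hm : Measurable fun x => gphi a x * gphi c (s - x) :=
      (gphi_measurable a).mul ((gphi_measurable c).comp (by fun_prop))
    have h1 : ∫⁻ x, gphi a x * gphi c (s - x)
        = ENNReal.ofReal s * ∫⁻ y, gphi a (s * y) * gphi c (s - s * y) := by
      have h := Real.smul_map_volume_mul_left hs.ne'
      conv_lhs => rw [← h]
      rw [lintegral_smul_measure, lintegral_map hm (by fun_prop), abs_of_pos hs]
      rfl
    have h2 : ∀ y, gphi a (s * y) * gphi c (s - s * y)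
        = ENNReal.ofReal (s ^ (a + c - 2) / Real.Gamma (a + c))
          * ProbabilityTheory.betaPDF a c y := by
      intro y
      rw [ProbabilityTheory.betaPDF_eq]
      by_cases hy : 0 < y ∧ y < 1
      · obtain ⟨hy0, hy1⟩ := hy
        have hsy : 0 < s * y := mul_pos hs hy0
        have hy1' : 0 < 1 - y := by linarith
        have e : s - s * y = s * (1 - y) := by ring
        have hsy' : 0 < s - s * y := by rw [e]; positivity
        rw [gphi, gphi, if_pos hsy, if_pos hsy', if_pos ⟨hy0, hy1⟩, e,
          ← ENNReal.ofReal_mul (by positivity), ← ENNReal.ofReal_mul (by positivity)]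
        congr 1
        rw [Real.mul_rpow hs.le hy0.le, Real.mul_rpow hs.le hy1'.le, ProbabilityTheory.beta,
          show a + c - 2 = (a - 1) + (c - 1) by ring, Real.rpow_add hs]
        field_simp
      · rw [if_neg hy, ENNReal.ofReal_zero, mul_zero]
        unfold gphi
        by_cases hy0 : 0 < y
        · have : 1 ≤ y := by
            by_contra h
            exact hy ⟨hy0, by linarith⟩
          rw [if_neg (show ¬ 0 < s - s * y by nlinarith), mul_zero]
        · rw [if_neg (show ¬ 0 < s * y by nlinarith), zero_mul]
    rw [h1]
    simp only [h2]
    rw [lintegral_const_mul' _ _ ENNReal.ofReal_ne_top,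
      ProbabilityTheory.lintegral_betaPDF_eq_one ha hc, mul_one, gphi, if_pos hs,
      ← ENNReal.ofReal_mul hs.le]
    congr 1
    rw [show a + c - 1 = 1 + (a + c - 2) by ring, Real.rpow_add hs, Real.rpow_one]
    ring

lemma gphi_multi (n : ℕ) : ∀ (a : Fin n → ℝ) (b s : ℝ), (∀ i, 0 < a i) → 0 < b →
    ∫⁻ x : Fin n → ℝ, (∏ i, gphi (a i) (x i)) * gphi b (s - ∑ i, x i)
      = gphi ((∑ i, a i) + b) s := by
  induction n with
  | zero =>
    intro a b s _ _
    simp [Measure.volume_pi_eq_dirac (0 : Fin 0 → ℝ)]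
  | succ n ih =>
    intro a b s ha hb
    have hmp := (volume_preserving_piFinSuccAbove (fun _ : Fin (n + 1) => ℝ) 0).symm
    rw [hmp.lintegral_map_equiv]
    have hm : Measurable fun x : Fin (n+1) → ℝ =>
        (∏ i, gphi (a i) (x i)) * gphi b (s - ∑ i, x i) :=
      (Finset.measurable_prod _ fun i _ => (gphi_measurable (a i)).comp (measurable_pi_apply i)).mul
        ((gphi_measurable b).comp (by fun_prop))
    rw [Measure.volume_eq_prod]
    refine (lintegral_prod _ (hm.comp (MeasurableEquiv.piFinSuccAbove
      (fun _ : Fin (n + 1) => ℝ) 0).symm.measurable).aemeasurable).trans ?_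
    simp only [Function.comp_apply, MeasurableEquiv.piFinSuccAbove_symm_apply, Fin.insertNthEquiv, Equiv.coe_fn_mk,
      Fin.insertNth_zero', Fin.prod_univ_succ, Fin.sum_univ_succ, Fin.cons_zero, Fin.cons_succ]
    have h1 : ∀ x : ℝ, ∫⁻ y : Fin n → ℝ, gphi (a 0) x * (∏ i, gphi (a i.succ) (y i))
        * gphi b (s - (x + ∑ i, y i))
        = gphi (a 0) x * gphi ((∑ i : Fin n, a i.succ) + b) (s - x) := by
      intro x
      rw [← ih (fun i => a i.succ) b (s - x) (fun i => ha _) hb, ← lintegral_const_mul]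
      · simp only [mul_assoc, sub_sub]
      · exact (Finset.measurable_prod _ fun i _ =>
          (gphi_measurable _).comp (measurable_pi_apply i)).mul
          ((gphi_measurable b).comp (by fun_prop))
    have hpos : 0 < (∑ i : Fin n, a i.succ) + b :=
      add_pos_of_nonneg_of_pos (Finset.sum_nonneg fun i _ => (ha _).le) hb
    simp only [h1]
    rw [gphi_conv _ _ _ (ha 0) hpos, add_assoc]

lemma simplex_meas (K : ℕ) : MeasurableSet (simplexCoords K) := by
  unfold simplexCoords
  refine MeasurableSet.inter (s₁ := {x : Fin (K - 1) → ℝ | ∀ i, 0 < x i}) ?_ ?_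
  · simp only [Set.ofPred_forall]
    exact MeasurableSet.iInter fun i => measurableSet_lt (by fun_prop) (by fun_prop)
  · exact measurableSet_lt (f := fun x : Fin (K - 1) → ℝ => ∑ i, x i) (g := fun _ => (1 : ℝ))
      (by fun_prop) (by fun_prop)

lemma fullProb_castSucc (n : ℕ) (x : Fin n → ℝ) (i : Fin n) :
    fullProb (n + 1) x i.castSucc = x i := by
  simp [fullProb]

lemma fullProb_last (n : ℕ) (x : Fin n → ℝ) :
    fullProb (n + 1) x (Fin.last n) = 1 - ∑ i, x i := by
  simp [fullProb]

lemma fullProb_pos (n : ℕ) (x : Fin n → ℝ) (hx : x ∈ simplexCoords (n + 1)) (k : Fin (n + 1)) :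
    0 < fullProb (n + 1) x k := by
  refine Fin.lastCases ?_ (fun i => ?_) k
  · rw [fullProb_last]
    have := hx.2
    simpa using this
  · rw [fullProb_castSucc]
    exact hx.1 i

lemma fullProb_measurable (n : ℕ) (k : Fin (n + 1)) :
    Measurable fun x : Fin n → ℝ => fullProb (n + 1) x k := by
  refine Fin.lastCases ?_ (fun i => ?_) k
  · simp only [fullProb_last]; fun_prop
  · simp only [fullProb_castSucc]; fun_prop

lemma dirichlet_total (n : ℕ) (γ : Fin (n + 1) → ℝ) (hγ : ∀ k, 0 < γ k) :
    ∫⁻ x in simplexCoords (n + 1), ENNReal.ofReal (dirichletPdf γ x) = 1 := by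
  have hS : 0 < ∑ k, γ k := Finset.sum_pos (fun k _ => hγ k) ⟨0, Finset.mem_univ _⟩
  have hG := Real.Gamma_pos_of_pos hS
  have key := gphi_multi n (fun i => γ i.castSucc) (γ (Fin.last n)) 1 (fun i => hγ _) (hγ _)
  rw [← Fin.sum_univ_castSucc] at key
  have e : ∀ x : Fin n → ℝ, (simplexCoords (n + 1)).indicator
      (fun x => ENNReal.ofReal (dirichletPdf γ x)) x
      = ENNReal.ofReal (Real.Gamma (∑ k, γ k)) *
        ((∏ i, gphi (γ i.castSucc) (x i)) * gphi (γ (Fin.last n)) (1 - ∑ i, x i)) := by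
    intro x
    by_cases hx : x ∈ simplexCoords (n + 1)
    · rw [Set.indicator_of_mem hx]
      have h1 : ∀ i, gphi (γ i.castSucc) (x i)
          = ENNReal.ofReal ((x i) ^ (γ i.castSucc - 1) / Real.Gamma (γ i.castSucc)) := by
        intro i; rw [gphi, if_pos (hx.1 i)]
      have h2 : 0 < 1 - ∑ i, x i := by
        have := hx.2
        simpa using this
      have h3 : ∀ i, 0 ≤ (x i) ^ (γ i.castSucc - 1) / Real.Gamma (γ i.castSucc) := fun i =>
        div_nonneg (Real.rpow_nonneg (hx.1 i).le _) (Real.Gamma_pos_of_pos (hγ _)).le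
      simp only [h1]
      rw [gphi, if_pos h2, ← ENNReal.ofReal_prod_of_nonneg (fun i _ => h3 i),
        ← ENNReal.ofReal_mul (Finset.prod_nonneg fun i _ => h3 i), ← ENNReal.ofReal_mul hG.le]
      congr 1
      rw [dirichletPdf, multiBeta, Fin.prod_univ_castSucc, Fin.prod_univ_castSucc,
        Finset.prod_div_distrib]
      simp only [fullProb_castSucc, fullProb_last]
      have h4 : (∏ i : Fin n, Real.Gamma (γ i.castSucc)) ≠ 0 :=
        Finset.prod_ne_zero_iff.2 fun i _ => (Real.Gamma_pos_of_pos (hγ _)).ne'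
      have h5 := (Real.Gamma_pos_of_pos (hγ (Fin.last n))).ne'
      field_simp
    · rw [Set.indicator_of_notMem hx]
      symm
      by_cases h : ∀ i, 0 < x i
      · have h2 : ¬ 0 < 1 - ∑ i, x i := by
          intro h2
          exact hx ⟨h, by simpa using h2⟩
        rw [gphi, if_neg h2, mul_zero, mul_zero]
      · push Not at h
        obtain ⟨i, hi⟩ := h
        rw [Finset.prod_eq_zero (Finset.mem_univ i), zero_mul, mul_zero]
        rw [gphi, if_neg (not_lt.2 hi)]
  rw [← lintegral_indicator (simplex_meas _)]
  refine (lintegral_congr e).trans ?_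
  rw [lintegral_const_mul' _ _ ENNReal.ofReal_ne_top]
  refine (congrArg _ key).trans ?_
  rw [gphi, if_pos one_pos, ← ENNReal.ofReal_mul hG.le, Real.one_rpow, mul_one_div_cancel hG.ne',
    ENNReal.ofReal_one]

lemma log_ge_aux (h : ℝ) (hh : 1 ≤ h) : 2 * (h - 1) / (h + 1) ≤ Real.log h := by
  have := Real.le_log_one_add_of_nonneg (x := h - 1) (by linarith)
  rw [show h - 1 + 2 = h + 1 by ring, show 1 + (h - 1) = h by ring] at this
  exact this

lemma sub_mul_log_ge (h : ℝ) (hh : 0 < h) :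
    2 * (h - 1) ^ 2 / (h + 1) ≤ (h - 1) * Real.log h := by
  rcases le_or_gt 1 h with h1 | h1
  · have := mul_le_mul_of_nonneg_left (log_ge_aux h h1) (sub_nonneg.2 h1)
    refine le_trans (le_of_eq ?_) this
    field_simp
  · have h2 := log_ge_aux h⁻¹ ((one_le_inv₀ hh).2 h1.le)
    rw [Real.log_inv] at h2
    have := mul_le_mul_of_nonneg_left h2 (sub_nonneg.2 h1.le)
    have e : 2 * (h - 1) ^ 2 / (h + 1) = (1 - h) * (2 * (h⁻¹ - 1) / (h⁻¹ + 1)) := by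
      field_simp
      ring
    rw [e]
    linarith

lemma sub_mul_log_nonneg (h : ℝ) (hh : 0 < h) : 0 ≤ (h - 1) * Real.log h :=
  le_trans (by positivity) (sub_mul_log_ge h hh)

lemma pointwise_aux (h t : ℝ) (hh : 0 < h) (ht : 0 < t) :
    1 - h ≤ t / 2 * ((h - 1) * Real.log h) + (1 + h) / (4 * t) := by
  have h1 := mul_le_mul_of_nonneg_left (sub_mul_log_ge h hh) (show 0 ≤ t / 2 by positivity)
  have h2 : 1 - h ≤ t / 2 * (2 * (h - 1) ^ 2 / (h + 1)) + (1 + h) / (4 * t) := by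
    have : t / 2 * (2 * (h - 1) ^ 2 / (h + 1)) + (1 + h) / (4 * t) - (1 - h)
        = (2 * t * (h - 1) + (h + 1)) ^ 2 / (4 * t * (h + 1)) := by
      field_simp
      ring
    have h3 : 0 ≤ (2 * t * (h - 1) + (h + 1)) ^ 2 / (4 * t * (h + 1)) := by positivity
    linarith
  linarith

open ProbabilityTheory in
lemma tilt_bound {Ω : Type*} [MeasurableSpace Ω] (μ : Measure Ω) [IsProbabilityMeasure μ]
    (X : Ω → ℝ) (M D0 D1 : ℝ)
    (h0 : 0 ∈ interior (integrableExpSet X μ)) (h1 : 1 ∈ interior (integrableExpSet X μ))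
    (hM : mgf X μ 1 = M) (hMpos : 0 < M)
    (hd0 : HasDerivAt (mgf X μ) D0 0) (hd1 : HasDerivAt (mgf X μ) D1 1)
    (A : Set Ω) (hA : MeasurableSet A) :
    μ.real A - ∫ x in A, Real.exp (X x) / M ∂μ ≤ Real.sqrt (D1 / M - D0) := by
  have e0 : ∫ x, X x ∂μ = D0 := by
    have := (hasDerivAt_mgf h0).unique hd0
    simpa using this
  have e1 : ∫ x, X x * Real.exp (X x) ∂μ = D1 := by
    have := (hasDerivAt_mgf h1).unique hd1
    simpa using this
  have i0 : Integrable X μ := by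
    have := integrable_pow_mul_exp_of_mem_interior_integrableExpSet h0 1
    simpa using this
  have i1 : Integrable (fun x => X x * Real.exp (X x)) μ := by
    have := integrable_pow_mul_exp_of_mem_interior_integrableExpSet h1 1
    simpa using this
  have iE : Integrable (fun x => Real.exp (X x)) μ := by
    have := interior_subset h1
    simpa [integrableExpSet] using this
  have eE : ∫ x, Real.exp (X x) ∂μ = M := by
    rw [← hM, mgf]
    simp
  set H : Ω → ℝ := fun x => Real.exp (X x) / M with hH
  have hHpos : ∀ x, 0 < H x := fun x => div_pos (Real.exp_pos _) hMpos
  have hlog : ∀ x, Real.log (H x) = X x - Real.log M := by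
    intro x
    rw [hH]
    simp only
    rw [Real.log_div (Real.exp_pos _).ne' hMpos.ne', Real.log_exp]
  have iH : Integrable H μ := iE.div_const M
  have eH : ∫ x, H x ∂μ = 1 := by
    rw [hH, integral_div, eE, div_self hMpos.ne']
  have hform : (fun x => (H x - 1) * Real.log (H x))
      = fun x => (X x * Real.exp (X x)) / M - X x - Real.log M * (H x - 1) := by
    funext x
    rw [hlog]
    simp only [hH]
    ring
  have iJ1 : Integrable (fun x => (X x * Real.exp (X x)) / M - X x) μ := (i1.div_const M).sub i0
  have iJ2 : Integrable (fun x => Real.log M * (H x - 1)) μ :=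
    (iH.sub (integrable_const 1)).const_mul _
  have iJ : Integrable (fun x => (H x - 1) * Real.log (H x)) μ := by
    rw [hform]
    exact iJ1.sub iJ2
  have eJ : ∫ x, (H x - 1) * Real.log (H x) ∂μ = D1 / M - D0 := by
    rw [hform, integral_sub iJ1 iJ2, integral_sub (i1.div_const M) i0, integral_div, e0, e1,
      integral_const_mul, integral_sub iH (integrable_const 1), eH]
    simp
  have i1H : Integrable (fun x => 1 + H x) μ := (integrable_const 1).add iH
  have hAle : ∫ x in A, (H x - 1) * Real.log (H x) ∂μ ≤ D1 / M - D0 := by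
    rw [← eJ]
    exact setIntegral_le_integral iJ (Filter.Eventually.of_forall fun x =>
      sub_mul_log_nonneg _ (hHpos x))
  have hBle : ∫ x in A, (1 + H x) ∂μ ≤ 2 := by
    have : ∫ x, (1 + H x) ∂μ = 2 := by
      rw [integral_add (integrable_const 1) iH, eH]
      simp
      norm_num
    rw [← this]
    exact setIntegral_le_integral i1H (Filter.Eventually.of_forall fun x => by
      have := hHpos x
      show 0 ≤ 1 + H x
      linarith)
  have hD : μ.real A - ∫ x in A, H x ∂μ = ∫ x in A, (1 - H x) ∂μ := by
    rw [integral_sub (integrable_const 1) iH.integrableOn]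
    simp
  rw [hD]
  set D := ∫ x in A, (1 - H x) ∂μ
  rcases le_or_gt D 0 with hD0 | hD0
  · exact hD0.trans (Real.sqrt_nonneg _)
  · have key : D ≤ (1 / D) / 2 * (D1 / M - D0) + 2 / (4 * (1 / D)) := by
      have ht : 0 < 1 / D := by positivity
      have s1 : D ≤ ∫ x in A, ((1 / D) / 2 * ((H x - 1) * Real.log (H x))
          + (1 + H x) / (4 * (1 / D))) ∂μ := by
        refine integral_mono ((integrable_const 1).sub iH.integrableOn)
          ((iJ.integrableOn.const_mul _).add (i1H.integrableOn.div_const _)) ?_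
        intro x
        exact pointwise_aux (H x) (1 / D) (hHpos x) ht
      rw [integral_add (iJ.integrableOn.const_mul _) (i1H.integrableOn.div_const _),
        integral_const_mul, integral_div] at s1
      refine s1.trans ?_
      gcongr
    apply Real.le_sqrt_of_sq_le
    have k2 := mul_le_mul_of_nonneg_left key hD0.le
    have : D * (1 / D / 2 * (D1 / M - D0) + 2 / (4 * (1 / D)))
        = (D1 / M - D0) / 2 + D ^ 2 / 2 := by
      field_simp
      ring
    rw [this] at k2
    nlinarith

/-- Directional log-likelihood statistic. -/
noncomputable def dirX (n : ℕ) (δ : Fin (n + 1) → ℝ) (x : Fin n → ℝ) : ℝ :=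
  ∑ k, δ k * Real.log (fullProb (n + 1) x k)

lemma dirX_measurable (n : ℕ) (δ : Fin (n + 1) → ℝ) : Measurable (dirX n δ) := by
  unfold dirX
  exact Finset.measurable_sum _ fun k _ =>
    (Real.measurable_log.comp (fullProb_measurable n k)).const_mul _

lemma pdf_measurable (n : ℕ) (γ : Fin (n + 1) → ℝ) :
    Measurable fun x : Fin n → ℝ => dirichletPdf γ x := by
  unfold dirichletPdf
  exact (Finset.measurable_prod _ fun k _ =>
    (fullProb_measurable n k).pow_const _).const_mul _

lemma multiBeta_pos (n : ℕ) (γ : Fin (n + 1) → ℝ) (hγ : ∀ k, 0 < γ k) : 0 < multiBeta γ := by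
  have hS : 0 < ∑ k, γ k := Finset.sum_pos (fun k _ => hγ k) ⟨0, Finset.mem_univ _⟩
  exact div_pos (Finset.prod_pos fun k _ => Real.Gamma_pos_of_pos (hγ k))
    (Real.Gamma_pos_of_pos hS)

lemma pdf_nonneg (n : ℕ) (γ : Fin (n + 1) → ℝ) (hγ : ∀ k, 0 < γ k) (x : Fin n → ℝ)
    (hx : x ∈ simplexCoords (n + 1)) : 0 ≤ dirichletPdf γ x := by
  unfold dirichletPdf
  have := multiBeta_pos n γ hγ
  exact mul_nonneg (by positivity)
    (Finset.prod_nonneg fun k _ => Real.rpow_nonneg (fullProb_pos n x hx k).le _)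

lemma pdf_tilt (n : ℕ) (γ δ : Fin (n + 1) → ℝ) (t : ℝ) (hγ : ∀ k, 0 < γ k)
    (ht : ∀ k, 0 < γ k + t * δ k) (x : Fin n → ℝ) (hx : x ∈ simplexCoords (n + 1)) :
    dirichletPdf γ x * Real.exp (t * dirX n δ x)
      = multiBeta (fun k => γ k + t * δ k) / multiBeta γ *
        dirichletPdf (fun k => γ k + t * δ k) x := by
  have h1 := multiBeta_pos n γ hγ
  have h2 := multiBeta_pos n (fun k => γ k + t * δ k) ht
  have h3 : Real.exp (t * dirX n δ x) = ∏ k, (fullProb (n + 1) x k) ^ (t * δ k) := by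
    rw [dirX, Finset.mul_sum, Real.exp_sum]
    refine Finset.prod_congr rfl fun k _ => ?_
    rw [Real.rpow_def_of_pos (fullProb_pos n x hx k)]
    congr 1
    ring
  have h4 : ∏ k, (fullProb (n + 1) x k) ^ (γ k + t * δ k - 1)
      = (∏ k, (fullProb (n + 1) x k) ^ (γ k - 1)) * ∏ k, (fullProb (n + 1) x k) ^ (t * δ k) := by
    rw [← Finset.prod_mul_distrib]
    refine Finset.prod_congr rfl fun k _ => ?_
    rw [← Real.rpow_add (fullProb_pos n x hx k)]
    congr 1
    ring
  rw [h3, dirichletPdf, dirichletPdf, h4]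
  field_simp

/-- The Dirichlet measure. -/
noncomputable def dirM (n : ℕ) (γ : Fin (n + 1) → ℝ) : Measure (Fin n → ℝ) :=
  (volume.restrict (simplexCoords (n + 1))).withDensity
    (fun x => ENNReal.ofReal (dirichletPdf γ x))

lemma dirM_prob (n : ℕ) (γ : Fin (n + 1) → ℝ) (hγ : ∀ k, 0 < γ k) :
    IsProbabilityMeasure (dirM n γ) := by
  constructor
  rw [dirM, withDensity_apply _ MeasurableSet.univ, Measure.restrict_univ]
  exact dirichlet_total n γ hγ

lemma tilt_set (n : ℕ) (γ δ : Fin (n + 1) → ℝ) (t : ℝ) (hγ : ∀ k, 0 < γ k)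
    (ht : ∀ k, 0 < γ k + t * δ k) (A : Set (Fin n → ℝ)) (hA : MeasurableSet A) :
    ∫⁻ x in A, ENNReal.ofReal (Real.exp (t * dirX n δ x)) ∂(dirM n γ)
      = ENNReal.ofReal (multiBeta (fun k => γ k + t * δ k) / multiBeta γ) *
        dirM n (fun k => γ k + t * δ k) A := by
  have h1 := multiBeta_pos n γ hγ
  have h2 := multiBeta_pos n (fun k => γ k + t * δ k) ht
  have hX := dirX_measurable n δ
  have hE : Measurable fun x => ENNReal.ofReal (Real.exp (t * dirX n δ x)) := by fun_prop
  rw [dirM, dirM]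
  refine (setLIntegral_withDensity_eq_setLIntegral_mul (volume.restrict (simplexCoords (n + 1)))
    (pdf_measurable n γ).ennreal_ofReal hE hA).trans ?_
  rw [withDensity_apply _ hA, ← lintegral_const_mul' _ _ ENNReal.ofReal_ne_top]
  refine lintegral_congr_ae (ae_restrict_of_ae ?_)
  filter_upwards [ae_restrict_mem (simplex_meas (n + 1))] with x hx
  rw [Pi.mul_apply, ← ENNReal.ofReal_mul (pdf_nonneg n γ hγ x hx),
    ← ENNReal.ofReal_mul (by positivity), pdf_tilt n γ δ t hγ ht x hx]

open ProbabilityTheory in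
lemma tilt_integrable (n : ℕ) (γ δ : Fin (n + 1) → ℝ) (t : ℝ) (hγ : ∀ k, 0 < γ k)
    (ht : ∀ k, 0 < γ k + t * δ k) :
    t ∈ integrableExpSet (dirX n δ) (dirM n γ) := by
  have hX := dirX_measurable n δ
  have := dirM_prob n _ ht
  have h := tilt_set n γ δ t hγ ht Set.univ MeasurableSet.univ
  rw [Measure.restrict_univ, measure_univ, mul_one] at h
  refine ⟨by fun_prop, ?_⟩
  rw [hasFiniteIntegral_iff_ofReal (Filter.Eventually.of_forall fun x => (Real.exp_pos _).le), h]
  exact ENNReal.ofReal_lt_top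

open ProbabilityTheory in
lemma tilt_mgf (n : ℕ) (γ δ : Fin (n + 1) → ℝ) (t : ℝ) (hγ : ∀ k, 0 < γ k)
    (ht : ∀ k, 0 < γ k + t * δ k) :
    mgf (dirX n δ) (dirM n γ) t = multiBeta (fun k => γ k + t * δ k) / multiBeta γ := by
  have h1 := multiBeta_pos n γ hγ
  have h2 := multiBeta_pos n (fun k => γ k + t * δ k) ht
  have hX := dirX_measurable n δ
  have := dirM_prob n _ ht
  have h := tilt_set n γ δ t hγ ht Set.univ MeasurableSet.univ
  rw [Measure.restrict_univ, measure_univ, mul_one] at h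
  rw [mgf, integral_eq_lintegral_of_nonneg_ae
    (Filter.Eventually.of_forall fun x => (Real.exp_pos _).le) (by fun_prop), h,
    ENNReal.toReal_ofReal (by positivity)]

lemma beta_deriv (n : ℕ) (γ δ : Fin (n + 1) → ℝ) (t : ℝ) (hδ : ∑ k, δ k = 0)
    (ht : ∀ k, 0 < γ k + t * δ k) :
    HasDerivAt (fun s : ℝ => multiBeta (fun k => γ k + s * δ k))
      (multiBeta (fun k => γ k + t * δ k) * ∑ k, δ k * digamma (γ k + t * δ k)) t := by
  have hG : ∀ k, HasDerivAt (fun s : ℝ => Real.Gamma (γ k + s * δ k))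
      (deriv Real.Gamma (γ k + t * δ k) * δ k) t := by
    intro k
    have hd : DifferentiableAt ℝ Real.Gamma (γ k + t * δ k) := by
      refine Real.differentiableAt_Gamma fun m hm => ?_
      have := ht k
      have hm' : (0 : ℝ) ≤ m := Nat.cast_nonneg m
      linarith
    have hl : HasDerivAt (fun s : ℝ => γ k + s * δ k) (δ k) t := by
      simpa using ((hasDerivAt_id t).mul_const (δ k)).const_add (γ k)
    exact hd.hasDerivAt.comp t hl
  have hsum : ∀ s : ℝ, ∑ k, (γ k + s * δ k) = ∑ k, γ k := by
    intro s
    rw [Finset.sum_add_distrib, ← Finset.mul_sum, hδ, mul_zero, add_zero]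
  have hP := HasDerivAt.fun_finsetProd (u := (Finset.univ : Finset (Fin (n + 1))))
    (fun k _ => hG k)
  have hP2 := hP.div_const (Real.Gamma (∑ k, γ k))
  unfold multiBeta
  simp only [hsum]
  refine hP2.congr_deriv ?_
  symm
  rw [Finset.mul_sum, Finset.sum_div]
  refine Finset.sum_congr rfl fun k _ => ?_
  have hk := (Real.Gamma_pos_of_pos (ht k)).ne'
  rw [← Finset.mul_prod_erase Finset.univ _ (Finset.mem_univ k), digamma, smul_eq_mul]
  field_simp

open ProbabilityTheory in
lemma dir_bound (n : ℕ) (γ δ : Fin (n + 1) → ℝ) (hδ : ∑ k, δ k = 0) (hγ : ∀ k, 0 < γ k)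
    (h1 : ∀ k, 0 < γ k + δ k) (A : Set (Fin n → ℝ)) (hA : MeasurableSet A) :
    (dirM n γ A).toReal - (dirM n (fun k => γ k + δ k) A).toReal
      ≤ Real.sqrt (∑ k, δ k * (digamma (γ k + δ k) - digamma (γ k))) := by
  have := dirM_prob n _ hγ
  have hX := dirX_measurable n δ
  set U : Set ℝ := {t | ∀ k, 0 < γ k + t * δ k} with hU
  have hUo : IsOpen U := by
    simp only [hU, Set.ofPred_forall]
    exact isOpen_iInter_of_finite fun k => isOpen_lt (by fun_prop) (by fun_prop)
  have hUs : U ⊆ interior (integrableExpSet (dirX n δ) (dirM n γ)) :=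
    interior_maximal (fun t ht => tilt_integrable n γ δ t hγ ht) hUo
  have m0 : (0 : ℝ) ∈ U := fun k => by simpa using hγ k
  have m1 : (1 : ℝ) ∈ U := fun k => by simpa using h1 k
  have hB0 := multiBeta_pos n γ hγ
  have hB1 := multiBeta_pos n _ h1
  have hd : ∀ t ∈ U, HasDerivAt (mgf (dirX n δ) (dirM n γ))
      (multiBeta (fun k => γ k + t * δ k) * (∑ k, δ k * digamma (γ k + t * δ k)) / multiBeta γ)
      t := by
    intro t ht
    refine ((beta_deriv n γ δ t hδ ht).div_const (multiBeta γ)).congr_of_eventuallyEq ?_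
    filter_upwards [hUo.mem_nhds ht] with s hs
    exact tilt_mgf n γ δ s hγ hs
  have hM := tilt_mgf n γ δ 1 hγ m1
  have hd0 := hd 0 m0
  have hd1 := hd 1 m1
  have hset := tilt_set n γ δ 1 hγ m1 A hA
  simp only [one_mul, zero_mul, add_zero] at hM hd0 hd1 hset
  have hMpos : 0 < multiBeta (fun k => γ k + δ k) / multiBeta γ := div_pos hB1 hB0
  have key := tilt_bound (dirM n γ) (dirX n δ) _ _ _ (hUs m0) (hUs m1) hM hMpos hd0 hd1 A hA
  have e1 : ∫ x in A, Real.exp (dirX n δ x) / (multiBeta (fun k => γ k + δ k) / multiBeta γ)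
      ∂(dirM n γ) = (dirM n (fun k => γ k + δ k) A).toReal := by
    rw [integral_div, integral_eq_lintegral_of_nonneg_ae
      (Filter.Eventually.of_forall fun x => (Real.exp_pos _).le) (by fun_prop), hset,
      ENNReal.toReal_mul, ENNReal.toReal_ofReal hMpos.le]
    field_simp
  have e2 : multiBeta (fun k => γ k + δ k) * (∑ k, δ k * digamma (γ k + δ k)) / multiBeta γ
      / (multiBeta (fun k => γ k + δ k) / multiBeta γ)
      - multiBeta γ * (∑ k, δ k * digamma (γ k)) / multiBeta γ
      = ∑ k, δ k * (digamma (γ k + δ k) - digamma (γ k)) := by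
    simp only [mul_sub, Finset.sum_sub_distrib]
    field_simp
  rw [e1, e2] at key
  exact key

/-- Proposition 1 (confidence-vector disclosure): the advantage of the attacker,
i.e. the gap `μ^out(A) - μ^in(A)` achievable by any (measurable) decision region
`A`, is bounded by `Adv^CV-ub`. -/
theorem stmt9 (K : ℕ) (hK : 2 ≤ K) (epsE Δ epsA : ℝ)
    (hεe : 0 < epsE) (hΔ : 0 ≤ Δ) (hεa₁ : Δ / (1 + Δ) < epsA) (hεa₂ : epsA < 1)
    (μout μin : Measure (Fin (K - 1) → ℝ))
    (hout : μout = (volume.restrict (simplexCoords K)).withDensity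
        (fun x => ENNReal.ofReal (dirichletPdf (gammaOut K epsE epsA) x)))
    (hin : μin = (volume.restrict (simplexCoords K)).withDensity
        (fun x => ENNReal.ofReal (dirichletPdf (gammaIn K epsE Δ epsA) x)))
    (A : Set (Fin (K - 1) → ℝ)) (hA : MeasurableSet A) (hA' : A ⊆ simplexCoords K) :
    (μout A).toReal - (μin A).toReal ≤ AdvCVub Δ epsA epsE K := by

  obtain ⟨n, rfl⟩ : ∃ n, K = n + 1 := ⟨K - 1, by omega⟩
  have hn : (0 : ℝ) < n := by
    have : 0 < n := by omega
    exact_mod_cast this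
  have hcast : ((n + 1 : ℕ) : ℝ) - 1 = n := by push_cast; ring
  have hΔ1 : 0 < 1 + Δ := by linarith
  have hεin : 0 < epsA * (1 + Δ) - Δ := by
    rw [div_lt_iff₀ hΔ1] at hεa₁
    linarith
  have hεa : 0 < epsA := lt_of_le_of_lt (div_nonneg hΔ hΔ1.le) hεa₁
  have h1a : 0 < 1 - epsA := by linarith
  set d : ℝ := Δ * (1 - epsA) / epsE with hd
  let δ : Fin (n + 1) → ℝ := fun k => if (k : ℕ) = 0 then d else -(d / n)
  have hin' : gammaIn (n + 1) epsE Δ epsA = fun k => gammaOut (n + 1) epsE epsA k + δ k := by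
    funext k
    simp only [gammaIn, gammaOut, δ, hcast]
    split_ifs
    · rw [hd]; ring
    · rw [hd]; field_simp; ring
  have hpo : ∀ k, 0 < gammaOut (n + 1) epsE epsA k := by
    intro k
    simp only [gammaOut, hcast]
    split_ifs <;> positivity
  have hpi : ∀ k, 0 < gammaOut (n + 1) epsE epsA k + δ k := by
    intro k
    have : 0 < gammaIn (n + 1) epsE Δ epsA k := by
      simp only [gammaIn, hcast]
      split_ifs <;> positivity
    rwa [hin'] at this
  have hδ : ∑ k, δ k = 0 := by
    rw [Fin.sum_univ_succ]
    simp [δ]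
    field_simp
    ring
  have key := dir_bound n (gammaOut (n + 1) epsE epsA) δ hδ hpo hpi A hA
  have ho : μout = dirM n (gammaOut (n + 1) epsE epsA) := hout
  have hi : μin = dirM n (fun k => gammaOut (n + 1) epsE epsA k + δ k) := by
    rw [← hin']; exact hin
  rw [ho, hi]
  refine key.trans (le_of_eq ?_)
  rw [AdvCVub]
  congr 1
  have hfun : ∀ k, gammaOut (n + 1) epsE epsA k + δ k = gammaIn (n + 1) epsE Δ epsA k := by
    intro k; rw [hin']
  simp only [hfun]
  rw [Fin.sum_univ_succ]
  simp only [gammaIn, gammaOut, δ, hcast, Fin.val_zero, Fin.val_succ, if_true,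
    Nat.succ_ne_zero, if_false, Finset.sum_const, Finset.card_univ, Fintype.card_fin,
    nsmul_eq_mul]
  rw [← hd]
  field_simp
  ring
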